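/- arXiv:1205.6980 — 4 statements merged into one kernel-verified Lean document; each statement's English description precedes it below -/
import Mathlib

section
/- Fix δ ∈ ℤ. Call a sequence x : {1,2,…} → ℝ dominant if it is strictly decreasing, and call two sequences x, y adjacent if y − x = ε_i or y − x = −ε_i for some i ≥ 1, where ε_i denotes the sequence with 1 in position i and 0 elsewhere. Then the map λ ↦ e_δ(λ) is a bijection from the set of all partitions onto the set of dominant sequences x for which there exists a finite chain ρ_δ = x⁽⁰⁾, x⁽¹⁾, …, x⁽ʳ⁾ = x of dominant sequences in which consecutive terms are adjacent; moreover, for partitions λ and μ, the sequences e_δ(λ) and e_δ(μ) are adjacent if and only if μ is obtained from λ by adding or removing a single box. (That is, e_δ is a graph isomorphism from the Young graph onto the connected component of ρ_δ in the dominant part of the lattice graph.) -/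
open Polynomial

/-- A partition: a weakly decreasing, finitely supported sequence of naturals λ_1, λ_2, …. -/
structure Ptn where
  toFun : ℕ+ → ℕ
  antitone' : ∀ i j : ℕ+, i ≤ j → toFun j ≤ toFun i
  finite_support' : ∃ N : ℕ+, ∀ i : ℕ+, N ≤ i → toFun i = 0

namespace Ptn

/-- The transpose partition: λ^T_i = #{k ≥ 1 : λ_k ≥ i}. -/
noncomputable def transpose (p : Ptn) (i : ℕ+) : ℕ :=
  Set.ncard {k : ℕ+ | (i : ℕ) ≤ p.toFun k}

/-- The empty partition. -/
def empty : Ptn where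
  toFun := fun _ => 0
  antitone' := fun _ _ _ => le_refl 0
  finite_support' := ⟨1, fun _ _ => rfl⟩

end Ptn

/-- e_δ(λ)_i = λ^T_i − δ/2 − i + 1. -/
noncomputable def ed (δ : ℤ) (p : Ptn) (i : ℕ+) : ℚ :=
  (p.transpose i : ℚ) - (δ : ℚ) / 2 - ((i : ℕ) : ℚ) + 1

/-- The δ-degree of singularity: #{(i,j) : 1 ≤ i < j, e_δ(λ)_i + e_δ(λ)_j = 0}. -/
noncomputable def degd (δ : ℤ) (p : Ptn) : ℕ :=
  Set.ncard {q : ℕ+ × ℕ+ | q.1 < q.2 ∧ ed δ p q.1 + ed δ p q.2 = 0}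

/-- The vertex set L: nonnegative integers if δ is even, {1/2, 3/2, …} if δ is odd. -/
def Lset (δ : ℤ) : Set ℚ :=
  {n : ℚ | 0 ≤ n ∧ ∃ k : ℤ, n + (δ : ℚ) / 2 = (k : ℚ)}

/-- Vertex n is labelled ∘ in x_λ: no entry of e_δ(λ) has absolute value n. -/
def IsCirc (δ : ℤ) (p : Ptn) (n : ℚ) : Prop := ∀ i : ℕ+, |ed δ p i| ≠ n

/-- Vertex n is labelled × in x_λ: n > 0 and both n and −n occur as entries. -/
def IsTimes (δ : ℤ) (p : Ptn) (n : ℚ) : Prop :=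
  0 < n ∧ (∃ i : ℕ+, ed δ p i = n) ∧ (∃ i : ℕ+, ed δ p i = -n)

/-- Vertex n is labelled ∧ in x_λ: n > 0, n occurs as an entry and −n does not. -/
def IsUp (δ : ℤ) (p : Ptn) (n : ℚ) : Prop :=
  0 < n ∧ (∃ i : ℕ+, ed δ p i = n) ∧ ¬ (∃ i : ℕ+, ed δ p i = -n)

/-- Vertex n is labelled ∨ in x_λ: n > 0, −n occurs and n does not, or n = 0 and 0 occurs. -/
def IsDown (δ : ℤ) (p : Ptn) (n : ℚ) : Prop :=
  (0 < n ∧ (∃ i : ℕ+, ed δ p i = -n) ∧ ¬ (∃ i : ℕ+, ed δ p i = n)) ∨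
  (n = 0 ∧ ∃ i : ℕ+, ed δ p i = 0)

/-- q is obtained from p by adding one box, in row k. -/
def AddBoxAt (p q : Ptn) (k : ℕ+) : Prop :=
  q.toFun k = p.toFun k + 1 ∧ ∀ t : ℕ+, t ≠ k → q.toFun t = p.toFun t

/-- q is obtained from p by removing one box, from row l. -/
def RemoveBoxAt (p q : Ptn) (l : ℕ+) : Prop :=
  q.toFun l + 1 = p.toFun l ∧ ∀ t : ℕ+, t ≠ l → q.toFun t = p.toFun t

/-- A box is addable to p at position (k,i): λ_k + 1 = i and increasing the k-th part
yields a partition. -/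
def AddableAt (p : Ptn) (k i : ℕ+) : Prop :=
  p.toFun k + 1 = (i : ℕ) ∧ ∃ q : Ptn, AddBoxAt p q k

/-- A box is removable from p at position (l,j): λ_l = j and decreasing the l-th part
yields a partition. -/
def RemovableAt (p : Ptn) (l j : ℕ+) : Prop :=
  p.toFun l = (j : ℕ) ∧ ∃ q : Ptn, RemoveBoxAt p q l

/-- Edge of the Young graph: q is obtained from p by adding or removing a single box. -/
def YoungEdge (p q : Ptn) : Prop := (∃ k, AddBoxAt p q k) ∨ (∃ k, AddBoxAt q p k)

/-- d(i,j) = λ_i + λ_j − i − j + 1 if i ≤ j, and −λ^T_i − λ^T_j + i + j − 1 if i > j. -/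
noncomputable def dbox (p : Ptn) (i j : ℕ+) : ℤ :=
  if (i : ℕ) ≤ (j : ℕ) then
    (p.toFun i : ℤ) + (p.toFun j : ℤ) - ((i : ℕ) : ℤ) - ((j : ℕ) : ℤ) + 1
  else
    -(p.transpose i : ℤ) - (p.transpose j : ℤ) + ((i : ℕ) : ℤ) + ((j : ℕ) : ℤ) - 1

/-- Hook length h(i,j) = λ_i − j + λ^T_j − i + 1. -/
noncomputable def hook (p : Ptn) (i j : ℕ+) : ℤ :=
  (p.toFun i : ℤ) - ((j : ℕ) : ℤ) + (p.transpose j : ℤ) - ((i : ℕ) : ℤ) + 1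

/-- The King polynomial P_λ(u) = ∏_{(i,j)∈[λ]} (u − 1 + d(i,j)) / h(i,j) ∈ ℚ[u]. -/
noncomputable def king (p : Ptn) : Polynomial ℚ :=
  ∏ᶠ (q : ℕ+ × ℕ+) (_ : (q.2 : ℕ) ≤ p.toFun q.1),
    Polynomial.C ((hook p q.1 q.2 : ℚ))⁻¹ *
      (Polynomial.X + Polynomial.C ((dbox p q.1 q.2 : ℚ) - 1))

/-- (ρ_δ)_i = −δ/2 − i + 1. -/
def rhod (δ : ℤ) (i : ℕ+) : ℚ := -(δ : ℚ) / 2 - ((i : ℕ) : ℚ) + 1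

/-- A sequence is dominant if it is strictly decreasing. -/
def Dominant (x : ℕ+ → ℚ) : Prop := ∀ i j : ℕ+, i < j → x j < x i

/-- ε_i: the sequence with 1 in position i and 0 elsewhere. -/
def eps (i : ℕ+) : ℕ+ → ℚ := fun j => if j = i then 1 else 0

/-- Two sequences are adjacent if they differ by ±ε_i for some i. -/
def AdjacentSeq (x y : ℕ+ → ℚ) : Prop := ∃ i : ℕ+, y = x + eps i ∨ y = x - eps i

/-- x lies in the connected component of ρ_δ in the dominant part of the lattice graph:
x is dominant and is joined to ρ_δ by a finite chain of pairwise adjacent dominant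
sequences. -/
def InComponent (δ : ℤ) (x : ℕ+ → ℚ) : Prop :=
  Dominant x ∧ ∃ (r : ℕ) (c : ℕ → ℕ+ → ℚ),
    c 0 = rhod δ ∧ c r = x ∧ (∀ t ≤ r, Dominant (c t)) ∧
    ∀ t < r, AdjacentSeq (c t) (c (t + 1))

/-- λ ∈ A_δ: λ is joined to ∅ in the Young graph by a chain of δ-regular partitions. -/
def InAdelta (δ : ℤ) (p : Ptn) : Prop :=
  ∃ (r : ℕ) (c : ℕ → Ptn), c 0 = Ptn.empty ∧ c r = p ∧
    (∀ t ≤ r, degd δ (c t) = degd δ Ptn.empty) ∧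
    ∀ t < r, YoungEdge (c t) (c (t + 1))

/- In terms of the transpose, `e_δ(λ) = ρ_δ + λ^T`. Adding a box to a partition means passing to a
Young diagram that covers the given one, so transposing, which reflects diagrams, is an involution
of the Young graph. Hence `e_δ` is injective, and adding a box to `λ` is adding some `ε_i` to
`e_δ(λ)`. Since consecutive entries of `ρ_δ` differ by one, `ρ_δ + a` with `a` integral is dominant
exactly when `a` is weakly decreasing. Removing corners one at a time therefore joins `e_δ(λ)` to
`ρ_δ` by dominant sequences. Conversely, a chain of unit steps from `ρ_δ` reaches only sequences
`ρ_δ + a` with `a` integral and finitely supported; if such a sequence is dominant, then `a`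
decreases to `0`, so it is nonnegative and is the transpose of a partition. -/

theorem pnat_le_ncard_iff_mem {s : Set ℕ+} (hs : IsLowerSet s) (hfin : s.Finite) {k : ℕ+} :
    (k : ℕ) ≤ s.ncard ↔ k ∈ s := by
  have ncard_Icc : (Set.Icc 1 k).ncard = k := by
    rw [← Finset.coe_Icc, Set.ncard_coe_finset, PNat.card_Icc, PNat.one_coe, Nat.add_sub_cancel]
  constructor
  · contrapose!
    intro hk
    have hsub : insert k s ⊆ Set.Icc 1 k := by
      rintro j (rfl | hj)
      · exact ⟨one_le, le_rfl⟩
      · exact ⟨one_le, le_of_not_ge fun hkj ↦ hk (hs hkj hj)⟩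
    calc s.ncard < (insert k s).ncard := by simp [Set.ncard_insert_of_notMem hk hfin]
      _ ≤ (Set.Icc 1 k).ncard := Set.ncard_le_ncard hsub (Set.finite_Icc 1 k)
      _ = k := ncard_Icc
  · intro hk
    have hsub : Set.Icc 1 k ⊆ s := fun j hj ↦ hs hj.2 hk
    exact ncard_Icc.ge.trans (Set.ncard_le_ncard hsub hfin)

theorem eq_of_forall_pnat_le_iff {a b : ℕ} (h : ∀ k : ℕ+, (k : ℕ) ≤ a ↔ (k : ℕ) ≤ b) : a = b := by
  refine eq_of_forall_le_iff fun k ↦ ?_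
  obtain rfl | hk := k.eq_zero_or_pos
  · simp only [Nat.zero_le]
  · exact h ⟨k, hk⟩

theorem exists_ge_finsupp_eq_zero {α β : Type*} [Preorder α] [NoMaxOrder α] [Zero β]
    (a : α →₀ β) (i : α) : ∃ j ≥ i, a j = 0 := by
  obtain ⟨j, hij, hj⟩ := (Set.Ici_infinite i).exists_notMem_finset a.support
  exact ⟨j, hij, Finsupp.notMem_support_iff.1 hj⟩

theorem finsupp_nonneg_of_antitone {α β : Type*} [Preorder α] [NoMaxOrder α] [Preorder β] [Zero β]
    {a : α →₀ β} (ha : Antitone a) (i : α) : 0 ≤ a i := by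
  obtain ⟨j, hij, hj⟩ := exists_ge_finsupp_eq_zero a i
  exact hj.ge.trans (ha hij)

attribute [ext] Ptn

namespace Ptn

theorem finite_setOf_le_toFun (p : Ptn) (i : ℕ+) : {k : ℕ+ | (i : ℕ) ≤ p.toFun k}.Finite := by
  obtain ⟨N, hN⟩ := p.finite_support'
  refine (Set.finite_Iio N).subset fun k (hk : (i : ℕ) ≤ p.toFun k) ↦ ?_
  exact Set.mem_Iio.2 (lt_of_not_ge fun hNk ↦ (i.pos.trans_le hk).ne' (hN k hNk))

theorem le_transpose_iff (p : Ptn) {i k : ℕ+} : (k : ℕ) ≤ p.transpose i ↔ (i : ℕ) ≤ p.toFun k :=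
  pnat_le_ncard_iff_mem (fun _ _ hjk hk ↦ hk.trans (p.antitone' _ _ hjk))
    (p.finite_setOf_le_toFun i)

/-- The transpose `λ^T`, bundled as a partition. -/
noncomputable def conj (p : Ptn) : Ptn where
  toFun := p.transpose
  antitone' i _ hij :=
    Set.ncard_le_ncard (fun _ hk ↦ (PNat.coe_le_coe _ _ |>.2 hij).trans hk)
      (p.finite_setOf_le_toFun i)
  finite_support' := by
    refine ⟨(p.toFun 1).succPNat, fun i hi ↦ ?_⟩
    by_contra hne
    have hle : (i : ℕ) ≤ p.toFun 1 := p.le_transpose_iff.1 (Nat.one_le_iff_ne_zero.2 hne)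
    exact (Nat.lt_of_succ_le hi).not_ge hle

theorem conj_conj (p : Ptn) : p.conj.conj = p := by
  ext i
  exact eq_of_forall_pnat_le_iff fun k ↦ p.conj.le_transpose_iff.trans p.le_transpose_iff

theorem conj_empty : empty.conj = empty := by
  ext i
  refine eq_of_forall_pnat_le_iff fun k ↦ empty.le_transpose_iff.trans ?_
  simp [empty]

/-- The Young diagram: the set of boxes `(k, i)`, in row `k` and column `i`, with `i ≤ λ_k`. -/
def diagram (p : Ptn) : Set (ℕ+ × ℕ+) := {b | (b.2 : ℕ) ≤ p.toFun b.1}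

theorem mem_diagram {p : Ptn} {k i : ℕ+} : (k, i) ∈ p.diagram ↔ (i : ℕ) ≤ p.toFun k := Iff.rfl

theorem finite_diagram (p : Ptn) : p.diagram.Finite := by
  refine ((p.finite_setOf_le_toFun 1).prod (Set.finite_Iic (p.toFun 1).succPNat)).subset ?_
  rintro ⟨k, i⟩ (hi : (i : ℕ) ≤ p.toFun k)
  have hk : p.toFun k ≤ p.toFun 1 := p.antitone' 1 k one_le
  exact ⟨i.pos.trans_le hi, (hi.trans hk).trans (Nat.le_succ _)⟩

theorem diagram_conj (p : Ptn) : p.conj.diagram = Prod.swap '' p.diagram := by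
  rw [Set.image_swap_eq_preimage_swap]
  ext ⟨k, i⟩
  exact p.le_transpose_iff

theorem diagram_conj_covBy_iff {p q : Ptn} :
    p.conj.diagram ⋖ q.conj.diagram ↔ p.diagram ⋖ q.diagram := by
  rw [diagram_conj, diagram_conj]
  exact apply_covBy_apply_iff (Equiv.prodComm ℕ+ ℕ+).toOrderIsoSet

theorem insert_diagram_of_addBoxAt {p q : Ptn} {k : ℕ+} (h : AddBoxAt p q k) :
    insert (k, (p.toFun k).succPNat) p.diagram = q.diagram := by
  obtain ⟨hk, hrow⟩ := h
  ext ⟨t, i⟩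
  rw [Set.mem_insert_iff, mem_diagram, mem_diagram, Prod.mk.injEq,
    ← PNat.coe_inj (n := (p.toFun k).succPNat), Nat.succPNat_coe]
  obtain rfl | ht := eq_or_ne t k
  · rw [hk, eq_self_iff_true, true_and]
    omega
  · simp only [hrow t ht, ht, false_and, false_or]

theorem addBoxAt_of_insert_diagram {p q : Ptn} {k i : ℕ+} (hi : (k, i) ∉ p.diagram)
    (h : insert (k, i) p.diagram = q.diagram) : AddBoxAt p q k := by
  have mem_iff (t j : ℕ+) : (j : ℕ) ≤ q.toFun t ↔ (t = k ∧ j = i) ∨ (j : ℕ) ≤ p.toFun t := by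
    rw [← mem_diagram, ← h, Set.mem_insert_iff, Prod.mk.injEq, mem_diagram]
  refine ⟨?_, fun t ht ↦ eq_of_forall_pnat_le_iff fun j ↦ by
    simp only [mem_iff, ht, false_and, false_or]⟩
  have hpi : p.toFun k < i := not_le.1 hi
  have hiq : (i : ℕ) ≤ q.toFun k := (mem_iff k i).2 (.inl ⟨rfl, rfl⟩)
  have eq_of_mem (j : ℕ+) (hpj : p.toFun k < j) (hjq : (j : ℕ) ≤ q.toFun k) : j = i :=
    (((mem_iff k j).1 hjq).resolve_right hpj.not_ge).2
  refine le_antisymm ?_ (hpi.trans_le hiq)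
  by_contra! hlt
  have h1 : (p.toFun k).succPNat = i := eq_of_mem _ (Nat.lt_succ_self _) hlt.le
  have h2 : (p.toFun k + 1).succPNat = i := eq_of_mem _ (Nat.lt_add_of_pos_right two_pos) hlt
  exact Nat.succ_ne_self _ (Nat.succPNat_injective (h2.trans h1.symm))

theorem exists_addBoxAt_iff_diagram_covBy {p q : Ptn} :
    (∃ k, AddBoxAt p q k) ↔ p.diagram ⋖ q.diagram := by
  rw [Set.covBy_iff_exists_insert]
  constructor
  · rintro ⟨k, hk⟩
    exact ⟨_, (Nat.lt_succ_self _).not_ge, insert_diagram_of_addBoxAt hk⟩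
  · rintro ⟨⟨k, i⟩, hi, hins⟩
    exact ⟨k, addBoxAt_of_insert_diagram hi hins⟩

theorem exists_addBoxAt_conj_iff {p q : Ptn} :
    (∃ i, AddBoxAt p.conj q.conj i) ↔ ∃ k, AddBoxAt p q k := by
  rw [exists_addBoxAt_iff_diagram_covBy, exists_addBoxAt_iff_diagram_covBy, diagram_conj_covBy_iff]

/-- The partition obtained by removing the last box of row `k`, which is a corner of the diagram
because the next row is strictly shorter. -/
def removeCorner (p : Ptn) (k : ℕ+) (hk : p.toFun (k + 1) < p.toFun k) : Ptn where
  toFun := Function.update p.toFun k (p.toFun k - 1)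
  antitone' := by
    refine antitone_of_add_one_le fun i _ ↦ ?_
    have hi : p.toFun (i + 1) ≤ p.toFun i := p.antitone' _ _ (PNat.lt_add_right i 1).le
    simp only [Function.update_apply]
    split_ifs with h1 h2 h2
    · exact le_rfl
    · exact (Nat.sub_le _ _).trans (h1 ▸ hi)
    · subst h2
      exact Nat.le_sub_one_of_lt hk
    · exact hi
  finite_support' := by
    obtain ⟨N, hN⟩ := p.finite_support'
    refine ⟨N, fun i hi ↦ ?_⟩
    obtain rfl | hik := eq_or_ne i k
    · simp [hN i hi]
    · simp [hik, hN i hi]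

theorem addBoxAt_removeCorner (p : Ptn) {k : ℕ+} (hk : p.toFun (k + 1) < p.toFun k) :
    AddBoxAt (p.removeCorner k hk) p k := by
  refine ⟨?_, fun t ht ↦ (Function.update_of_ne ht _ _).symm⟩
  simp only [removeCorner, Function.update_self]
  omega

theorem exists_toFun_add_one_lt {p : Ptn} (hp : p ≠ empty) :
    ∃ k, p.toFun (k + 1) < p.toFun k := by
  contrapose! hp
  obtain ⟨N, hN⟩ := p.finite_support'
  have hmono : Monotone p.toFun := monotone_of_le_add_one fun k _ ↦ hp k
  ext i
  exact Nat.le_zero.1 ((hmono (le_max_left i N)).trans (hN _ (le_max_right i N)).le)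

@[elab_as_elim]
theorem addBox_induction {motive : Ptn → Prop} (empty : motive Ptn.empty)
    (addBox : ∀ p q k, AddBoxAt p q k → motive p → motive q) (p : Ptn) : motive p := by
  induction h : p.diagram.ncard using Nat.strong_induction_on generalizing p with
  | _ n ih =>
    subst h
    obtain rfl | hp := eq_or_ne p Ptn.empty
    · exact empty
    · obtain ⟨k, hk⟩ := exists_toFun_add_one_lt hp
      have hadd := p.addBoxAt_removeCorner hk
      have hlt := (exists_addBoxAt_iff_diagram_covBy.1 ⟨k, hadd⟩).lt
      exact addBox _ p k hadd (ih _ (Set.ncard_lt_ncard hlt p.finite_diagram) _ rfl)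

theorem exists_toFun_eq {a : ℕ+ →₀ ℤ} (ha : Antitone a) :
    ∃ p : Ptn, ∀ i, (p.toFun i : ℤ) = a i := by
  obtain ⟨N, -, hN⟩ := exists_ge_finsupp_eq_zero a 1
  let p : Ptn :=
    { toFun i := (a i).toNat
      antitone' _ _ hij := Int.toNat_le_toNat (ha hij)
      finite_support' := ⟨N, fun _ hi ↦ Int.toNat_of_nonpos ((ha hi).trans hN.le)⟩ }
  exact ⟨p, fun i ↦ Int.toNat_of_nonneg (finsupp_nonneg_of_antitone ha i)⟩

end Ptn

/-- The sequence `ρ_δ + a`. Taking `a` integral makes the entries of `ρ_δ + a` differ by integers,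
so that dominance and adjacency become conditions on `a`. -/
def rhodAdd (δ : ℤ) (a : ℕ+ → ℤ) : ℕ+ → ℚ := fun i ↦ rhod δ i + a i

section

variable {δ : ℤ}

theorem rhodAdd_zero : rhodAdd δ 0 = rhod δ := by
  ext i
  simp [rhodAdd]

theorem rhodAdd_injective : Function.Injective (rhodAdd δ) := by
  intro a b hab
  ext i
  simpa [rhodAdd] using congrFun hab i

theorem rhodAdd_add_single (a : ℕ+ → ℤ) (i : ℕ+) :
    rhodAdd δ (a + Pi.single i 1) = rhodAdd δ a + eps i := by
  ext j
  simp [rhodAdd, eps, Pi.single_apply, add_assoc]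

theorem dominant_rhodAdd_iff {a : ℕ+ → ℤ} : Dominant (rhodAdd δ a) ↔ Antitone a := by
  constructor
  · intro h
    refine antitone_of_add_one_le fun i _ ↦ Int.lt_add_one_iff.1 ?_
    have hi := h i (i + 1) (PNat.lt_add_right i 1)
    simp only [rhodAdd, rhod, PNat.add_coe, PNat.one_coe] at hi
    push_cast at hi
    have hlt : (a (i + 1) : ℚ) < a i + 1 := by linarith
    exact_mod_cast hlt
  · intro h i j hij
    have ha : (a j : ℚ) ≤ a i := by exact_mod_cast h hij.le
    have hij' : ((i : ℕ) : ℚ) < (j : ℕ) := by exact_mod_cast hij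
    simp only [rhodAdd, rhod]
    linarith

theorem dominant_rhod : Dominant (rhod δ) := by
  rw [← rhodAdd_zero, dominant_rhodAdd_iff]
  exact antitone_const

theorem ed_eq_rhodAdd (p : Ptn) : ed δ p = rhodAdd δ fun i ↦ p.conj.toFun i := by
  ext i
  simp only [ed, rhodAdd, rhod, Ptn.conj, Int.cast_natCast]
  ring

theorem ed_empty : ed δ Ptn.empty = rhod δ := by
  rw [ed_eq_rhodAdd, ← rhodAdd_zero, Ptn.conj_empty]
  rfl

theorem ed_injective : Function.Injective (ed δ) := by
  intro p q h
  rw [ed_eq_rhodAdd, ed_eq_rhodAdd] at h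
  have hconj : p.conj = q.conj := Ptn.ext (funext fun i ↦ by
    exact_mod_cast congrFun (rhodAdd_injective h) i)
  rw [← p.conj_conj, hconj, q.conj_conj]

theorem dominant_ed (p : Ptn) : Dominant (ed δ p) := by
  rw [ed_eq_rhodAdd, dominant_rhodAdd_iff]
  exact fun i j hij ↦ Int.ofNat_le.2 (p.conj.antitone' i j hij)

theorem ed_eq_add_eps_iff {p q : Ptn} {i : ℕ+} :
    ed δ q = ed δ p + eps i ↔ AddBoxAt p.conj q.conj i := by
  rw [ed_eq_rhodAdd, ed_eq_rhodAdd, ← rhodAdd_add_single, rhodAdd_injective.eq_iff, funext_iff]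
  constructor
  · intro h
    refine ⟨?_, fun t ht ↦ ?_⟩
    · have hi := h i
      rw [Pi.add_apply, Pi.single_eq_same] at hi
      exact_mod_cast hi
    · have hrow := h t
      rw [Pi.add_apply, Pi.single_eq_of_ne ht, add_zero] at hrow
      exact_mod_cast hrow
  · rintro ⟨hi, hrow⟩ t
    obtain rfl | ht := eq_or_ne t i
    · simp [hi]
    · simp [hrow t ht, ht]

theorem adjacentSeq_iff {x y : ℕ+ → ℚ} :
    AdjacentSeq x y ↔ (∃ i, y = x + eps i) ∨ ∃ i, x = y + eps i := by
  simp only [AdjacentSeq, exists_or, eq_sub_iff_add_eq, eq_comm (a := x)]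

theorem adjacentSeq_ed_iff {p q : Ptn} : AdjacentSeq (ed δ p) (ed δ q) ↔ YoungEdge p q := by
  simp only [adjacentSeq_iff, ed_eq_add_eps_iff, Ptn.exists_addBoxAt_conj_iff, YoungEdge]

theorem inComponent_rhod : InComponent δ (rhod δ) :=
  ⟨dominant_rhod, 0, fun _ ↦ rhod δ, rfl, rfl, fun _ _ ↦ dominant_rhod,
    fun _ ht ↦ absurd ht (Nat.not_lt_zero _)⟩

namespace InComponent

theorem tail {x y : ℕ+ → ℚ} (hx : InComponent δ x) (hy : Dominant y) (hxy : AdjacentSeq x y) :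
    InComponent δ y := by
  obtain ⟨-, r, c, h0, rfl, hdom, hadj⟩ := hx
  refine ⟨hy, r + 1, fun t ↦ if t ≤ r then c t else y, by simpa using h0, by simp, ?_, ?_⟩
  · intro t _
    dsimp only
    split_ifs with htr
    exacts [hdom t htr, hy]
  · intro t ht
    obtain htr | rfl := Nat.lt_succ_iff_lt_or_eq.1 ht
    · simpa [htr.le, Nat.succ_le_of_lt htr] using hadj t htr
    · simpa using hxy

@[elab_as_elim]
theorem induction_on {motive : (ℕ+ → ℚ) → Prop} {x : ℕ+ → ℚ} (hx : InComponent δ x)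
    (base : motive (rhod δ)) (step : ∀ y z, AdjacentSeq y z → motive y → motive z) :
    motive x := by
  obtain ⟨-, r, c, h0, rfl, -, hadj⟩ := hx
  have hc : ∀ t ≤ r, motive (c t) := by
    intro t
    induction t with
    | zero => exact fun _ ↦ h0 ▸ base
    | succ t ih => exact fun ht ↦ step _ _ (hadj t ht) (ih (Nat.le_of_succ_le ht))
  exact hc r le_rfl

theorem exists_finsupp {x : ℕ+ → ℚ} (hx : InComponent δ x) :
    ∃ a : ℕ+ →₀ ℤ, rhodAdd δ a = x := by
  refine induction_on hx ⟨0, rhodAdd_zero⟩ ?_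
  rintro _ z hadj ⟨a, rfl⟩
  obtain ⟨i, rfl⟩ | ⟨i, hi⟩ := adjacentSeq_iff.1 hadj
  · refine ⟨a + Finsupp.single i 1, ?_⟩
    rw [Finsupp.coe_add, Finsupp.single_eq_pi_single, rhodAdd_add_single]
  · refine ⟨a - Finsupp.single i 1, add_right_cancel (b := eps i) ?_⟩
    rw [← hi, ← rhodAdd_add_single, Finsupp.coe_sub, Finsupp.single_eq_pi_single, sub_add_cancel]

theorem exists_ed_eq {x : ℕ+ → ℚ} (hx : InComponent δ x) : ∃ p : Ptn, ed δ p = x := by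
  obtain ⟨a, rfl⟩ := hx.exists_finsupp
  obtain ⟨p, hp⟩ := Ptn.exists_toFun_eq (dominant_rhodAdd_iff.1 hx.1)
  refine ⟨p.conj, ?_⟩
  rw [ed_eq_rhodAdd, p.conj_conj, funext hp]

end InComponent

theorem inComponent_ed (p : Ptn) : InComponent δ (ed δ p) := by
  induction p using Ptn.addBox_induction with
  | empty => exact ed_empty (δ := δ) ▸ inComponent_rhod
  | addBox p q k hk ih => exact ih.tail (dominant_ed q) (adjacentSeq_ed_iff.2 (.inl ⟨k, hk⟩))

end

/-- e_δ is a graph isomorphism from the Young graph onto the connected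
component of ρ_δ in the dominant part of the lattice graph. -/
theorem stmt0 (δ : ℤ) :
    (∀ p : Ptn, InComponent δ (ed δ p)) ∧
    (Function.Injective fun p : Ptn => ed δ p) ∧
    (∀ x : ℕ+ → ℚ, InComponent δ x → ∃ p : Ptn, ed δ p = x) ∧
    (∀ p q : Ptn, AdjacentSeq (ed δ p) (ed δ q) ↔ YoungEdge p q) :=
  ⟨inComponent_ed, ed_injective, fun _ hx ↦ hx.exists_ed_eq, fun _ _ ↦ adjacentSeq_ed_iff⟩
end

section
/- Let δ ∈ ℤ and let λ, μ be partitions such that μ is obtained from λ by adding one box. Then deg_δ(μ) equals deg_δ(λ), deg_δ(λ) + 1, or deg_δ(λ) − 1. -/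
open Polynomial

/-!
Adding a box to `λ` in column `c` raises `λᵀ_c` by one, so `e_δ(λ)` changes only in its `c`-th
entry and the pairs avoiding the index `c` are the same before and after. An injective sequence
takes the value `-e_δ(λ)_c` at most once, so at most one pair involves `c`, and the two counts
differ by at most one. The counts are genuine because `e_δ(λ)` decreases to `-∞`, which leaves only
finitely many pairs.
-/

section AntipodalPairs

open Filter

variable {ι G : Type*}

/-- The index pairs counted by the degree of singularity, for an arbitrary sequence `e`; each
unordered pair is recorded once, with its smaller index first. -/
def antipodalPairs [LT ι] [Add G] [Zero G] (e : ι → G) : Set (ι × ι) :=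
  {x | x.1 < x.2 ∧ e x.1 + e x.2 = 0}

theorem subsingleton_antipodalPairs_inter [Preorder ι] [AddGroup G] {e : ι → G}
    (he : e.Injective) (c : ι) :
    (antipodalPairs e ∩ {x | x.1 = c ∨ x.2 = c}).Subsingleton := by
  rintro ⟨a, b⟩ ⟨⟨hab, hsum⟩, rfl | rfl⟩ ⟨a', b'⟩ ⟨⟨hab', hsum'⟩, rfl | rfl⟩
  · exact Prod.ext rfl (he (add_left_cancel (hsum.trans hsum'.symm)))
  · have hba_eq : b = a' :=
      he ((neg_eq_of_add_eq_zero_right hsum).symm.trans (neg_eq_of_add_eq_zero_left hsum'))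
    exact absurd (hba_eq ▸ hab') (lt_asymm hab)
  · have hab_eq : a = b' :=
      he ((neg_eq_of_add_eq_zero_left hsum).symm.trans (neg_eq_of_add_eq_zero_right hsum'))
    exact absurd (hab_eq ▸ hab') (lt_asymm hab)
  · exact Prod.ext (he (add_right_cancel (hsum.trans hsum'.symm))) rfl

theorem antipodalPairs_sdiff_subset_of_eqOn [LT ι] [Add G] [Zero G] {e f : ι → G} {c : ι}
    (hef : Set.EqOn e f {c}ᶜ) :
    antipodalPairs f \ {x | x.1 = c ∨ x.2 = c} ⊆ antipodalPairs e := by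
  rintro ⟨a, b⟩ ⟨⟨hab, hsum⟩, hc⟩
  obtain ⟨ha, hb⟩ := not_or.mp hc
  exact ⟨hab, by rwa [hef ha, hef hb]⟩

theorem ncard_antipodalPairs_le_add_one_of_eqOn [Preorder ι] [AddGroup G] {e f : ι → G} {c : ι}
    (hf : f.Injective) (he : (antipodalPairs e).Finite) (hef : Set.EqOn e f {c}ᶜ) :
    (antipodalPairs f).ncard ≤ (antipodalPairs e).ncard + 1 := by
  let S : Set (ι × ι) := {x | x.1 = c ∨ x.2 = c}
  have hpairs : (antipodalPairs f ∩ S).Subsingleton := subsingleton_antipodalPairs_inter hf c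
  have : Finite ↥(antipodalPairs f ∩ S) := hpairs.finite
  calc (antipodalPairs f).ncard
      = (antipodalPairs f \ S ∪ antipodalPairs f ∩ S).ncard := by rw [Set.sdiff_union_inter]
    _ ≤ (antipodalPairs f \ S).ncard + (antipodalPairs f ∩ S).ncard := Set.ncard_union_le _ _
    _ ≤ (antipodalPairs e).ncard + 1 :=
      add_le_add (Set.ncard_le_ncard (antipodalPairs_sdiff_subset_of_eqOn hef) he)
        (Set.ncard_le_one_iff_subsingleton.mpr hpairs)

theorem finite_antipodalPairs_of_strictAnti [LinearOrder ι] [OrderBot ι] [LocallyFiniteOrderBot ι]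
    [AddCommGroup G] [PartialOrder G] [IsOrderedAddMonoid G] {e : ι → G}
    (he : StrictAnti e) (hbot : Tendsto e atTop atBot) : (antipodalPairs e).Finite := by
  obtain ⟨N, hN⟩ := (hbot.eventually_le_atBot (-e ⊥)).exists
  refine ((Set.finite_Iic N).prod (Set.finite_Iic N)).subset ?_
  rintro ⟨a, b⟩ ⟨hab, hsum⟩
  suffices hb : b ≤ N from ⟨hab.le.trans hb, hb⟩
  refine he.le_iff_ge.mp ?_
  calc e N ≤ -e ⊥ := hN
    _ ≤ -e a := neg_le_neg (he.antitone bot_le)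
    _ = e b := neg_eq_of_add_eq_zero_right hsum

end AntipodalPairs

theorem Ptn.finite_setOf_le_toFun_s1 (p : Ptn) {n : ℕ} (hn : 0 < n) :
    {k : ℕ+ | n ≤ p.toFun k}.Finite := by
  obtain ⟨N, hN⟩ := p.finite_support'
  refine (Set.finite_Iio N).subset fun k hk => Set.mem_Iio.mpr ?_
  by_contra! hNk
  exact hn.not_ge (hk.trans_eq (hN k hNk))

theorem Ptn.transpose_antitone (p : Ptn) : Antitone p.transpose := fun i _ hij =>
  Set.ncard_le_ncard (fun _ hk => (PNat.coe_le_coe _ _ |>.mpr hij).trans hk)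
    (p.finite_setOf_le_toFun_s1 i.pos)

theorem ed_strictAnti (δ : ℤ) (p : Ptn) : StrictAnti (ed δ p) := by
  intro i j hij
  have htranspose : (p.transpose j : ℚ) ≤ p.transpose i :=
    Nat.cast_le.mpr (p.transpose_antitone hij.le)
  have hindex : ((i : ℕ) : ℚ) < ((j : ℕ) : ℚ) := Nat.cast_lt.mpr hij
  unfold ed
  linarith

theorem tendsto_ed_atBot (δ : ℤ) (p : Ptn) :
    Filter.Tendsto (ed δ p) Filter.atTop Filter.atBot := by
  have hindex : Filter.Tendsto (fun i : ℕ+ => ((i : ℕ) : ℚ)) Filter.atTop Filter.atTop :=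
    tendsto_natCast_atTop_atTop.comp tendsto_PNat_val_atTop_atTop
  refine Filter.tendsto_atBot_mono (fun i => ?_) (Filter.tendsto_atBot_add_const_left _
    ((p.transpose 1 : ℚ) - δ / 2 + 1) (Filter.tendsto_neg_atTop_atBot.comp hindex))
  have htranspose : (p.transpose i : ℚ) ≤ p.transpose 1 :=
    Nat.cast_le.mpr (p.transpose_antitone one_le)
  simp only [ed, Function.comp_apply]
  linarith

theorem finite_antipodalPairs_ed (δ : ℤ) (p : Ptn) : (antipodalPairs (ed δ p)).Finite :=
  finite_antipodalPairs_of_strictAnti (ed_strictAnti δ p) (tendsto_ed_atBot δ p)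

theorem AddBoxAt.transpose_eq {p q : Ptn} {k i : ℕ+} (h : AddBoxAt p q k)
    (hi : (i : ℕ) ≠ p.toFun k + 1) : q.transpose i = p.transpose i := by
  have hcolumn : ∀ t : ℕ+, (i : ℕ) ≤ q.toFun t ↔ (i : ℕ) ≤ p.toFun t := by
    intro t
    obtain rfl | ht := eq_or_ne t k
    · rw [h.1]
      omega
    · rw [h.2 t ht]
  simp only [Ptn.transpose, hcolumn]

theorem AddBoxAt.eqOn_ed (δ : ℤ) {p q : Ptn} {k : ℕ+} (h : AddBoxAt p q k) :
    Set.EqOn (ed δ p) (ed δ q) {(p.toFun k).succPNat}ᶜ := by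
  intro i hi
  have hindex : (i : ℕ) ≠ p.toFun k + 1 := fun heq => hi (PNat.eq heq)
  simp only [ed, h.transpose_eq hindex]

/-- adding one box changes the δ-degree of singularity by 0, +1 or −1. -/
theorem stmt1 (δ : ℤ) (p q : Ptn) (h : ∃ k, AddBoxAt p q k) :
    degd δ q = degd δ p ∨ degd δ q = degd δ p + 1 ∨ degd δ q + 1 = degd δ p := by
  obtain ⟨k, hk⟩ := h
  have hqp : degd δ q ≤ degd δ p + 1 :=
    ncard_antipodalPairs_le_add_one_of_eqOn (ed_strictAnti δ q).injective
      (finite_antipodalPairs_ed δ p) (hk.eqOn_ed δ)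
  have hpq : degd δ p ≤ degd δ q + 1 :=
    ncard_antipodalPairs_le_add_one_of_eqOn (ed_strictAnti δ p).injective
      (finite_antipodalPairs_ed δ q) (hk.eqOn_ed δ).symm
  omega
end

section
/- Let δ ∈ ℤ and let λ, μ be partitions such that μ is obtained from λ by adding one box. Then there exists n₀ ∈ L such that for every vertex n ∈ L with n ≠ n₀ and n ≠ n₀ + 1, the label of n in the weight diagram x_λ equals the label of n in the weight diagram x_μ; that is, the weight diagrams x_λ and x_μ agree except possibly at two adjacent vertices. -/
open Polynomial

/-!
Adding a box in column `c` raises the single entry `a = e_δ(λ)_c` to `a + 1`. The label of `n`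
depends only on whether `n` and `-n` are entries, so it can change only at `|a|` and `|a + 1|`.
These are two vertices at distance at most `1` whose difference is an integer, hence they are
equal or adjacent (equal exactly when `a = -1/2`).
-/

/-- The weight diagrams of `p` and `q` carry the same label at `n`. As the labels are predicates,
this asks that each of the four holds for both partitions or for neither. -/
def SameLabel (δ : ℤ) (p q : Ptn) (n : ℚ) : Prop :=
  (IsCirc δ p n ↔ IsCirc δ q n) ∧ (IsTimes δ p n ↔ IsTimes δ q n) ∧
    (IsUp δ p n ↔ IsUp δ q n) ∧ (IsDown δ p n ↔ IsDown δ q n)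

theorem isCirc_iff_notMem_range {δ : ℤ} {p : Ptn} {n : ℚ} (hn : 0 ≤ n) :
    IsCirc δ p n ↔ n ∉ Set.range (ed δ p) ∧ -n ∉ Set.range (ed δ p) := by
  simp only [IsCirc, ne_eq, abs_eq hn, not_or, forall_and, Set.mem_range, not_exists]

theorem sameLabel_of_mem_range_iff {δ : ℤ} {p q : Ptn} {n : ℚ} (hn : 0 ≤ n)
    (hpos : n ∈ Set.range (ed δ p) ↔ n ∈ Set.range (ed δ q))
    (hneg : -n ∈ Set.range (ed δ p) ↔ -n ∈ Set.range (ed δ q)) : SameLabel δ p q n := by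
  refine ⟨?_, ?_, ?_, ?_⟩
  · rw [isCirc_iff_notMem_range hn, isCirc_iff_notMem_range hn, hpos, hneg]
  · exact and_congr_right' (and_congr hpos hneg)
  · exact and_congr_right' (and_congr hpos (not_congr hneg))
  · refine or_congr (and_congr_right' (and_congr hneg (not_congr hpos))) ?_
    refine and_congr_right fun hzero => ?_
    rwa [hzero] at hpos

theorem mem_range_add_eps_iff {x : ℕ+ → ℚ} {i : ℕ+} {y : ℚ} (h : y ≠ x i) (h' : y ≠ x i + 1) :
    y ∈ Set.range (x + eps i) ↔ y ∈ Set.range x := by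
  refine exists_congr fun j => ?_
  obtain rfl | hj := eq_or_ne j i
  · simp [eps, h.symm, h'.symm]
  · simp [eps, hj]

section Vertices

variable {δ : ℤ} {m n : ℚ}

theorem abs_mem_Lset {x : ℚ} (hx : ∃ k : ℤ, x + (δ : ℚ) / 2 = k) : |x| ∈ Lset δ := by
  obtain ⟨k, hk⟩ := hx
  refine ⟨abs_nonneg x, ?_⟩
  obtain h | h := abs_choice x
  · exact ⟨k, by rw [h, hk]⟩
  · exact ⟨δ - k, by rw [h]; push_cast; linarith⟩

theorem abs_ed_mem_Lset (δ : ℤ) (p : Ptn) (i : ℕ+) : |ed δ p i| ∈ Lset δ :=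
  abs_mem_Lset ⟨p.transpose i - (i : ℕ) + 1, by rw [ed]; push_cast; ring⟩

theorem eq_or_eq_add_one_of_mem_Lset (hm : m ∈ Lset δ) (hn : n ∈ Lset δ) (hmn : m ≤ n)
    (hnm : n ≤ m + 1) : n = m ∨ n = m + 1 := by
  obtain ⟨-, j, hj⟩ := hm
  obtain ⟨-, k, hk⟩ := hn
  have hdiff : n = m + (k - j : ℤ) := by push_cast; linarith
  have hlower : 0 ≤ k - j := by
    rw [← Int.cast_nonneg_iff (R := ℚ)]; linarith
  have hupper : k - j ≤ 1 := by
    rw [← Int.cast_le (R := ℚ), Int.cast_one]; linarith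
  obtain h | h : k - j = 0 ∨ k - j = 1 := by omega
  · left; simpa [h] using hdiff
  · right; simpa [h] using hdiff

theorem exists_pair_subset_adjacent_of_mem_Lset (hm : m ∈ Lset δ) (hn : n ∈ Lset δ)
    (hdist : |m - n| ≤ 1) : ∃ n₀ ∈ Lset δ, ({m, n} : Set ℚ) ⊆ {n₀, n₀ + 1} := by
  wlog hmn : m ≤ n generalizing m n
  · rw [Set.pair_comm]
    exact this hn hm (by rwa [abs_sub_comm]) (le_of_not_ge hmn)
  have hnm : n ≤ m + 1 := by linarith [(abs_le.mp hdist).1]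
  exact ⟨m, hm, Set.pair_subset (Set.mem_insert _ _)
    (eq_or_eq_add_one_of_mem_Lset hm hn hmn hnm)⟩

end Vertices

theorem Ptn.finite_setOf_le (p : Ptn) (i : ℕ+) : {k : ℕ+ | (i : ℕ) ≤ p.toFun k}.Finite := by
  obtain ⟨N, hN⟩ := p.finite_support'
  refine (Set.finite_Iio N).subset fun k (hk : (i : ℕ) ≤ p.toFun k) => ?_
  by_contra hNk
  exact (i.pos.trans_le hk).ne' (hN k (not_lt.mp hNk))

namespace AddBoxAt

variable {p q : Ptn} {k : ℕ+}

theorem transpose_succPNat (h : AddBoxAt p q k) :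
    q.transpose (p.toFun k).succPNat = p.transpose (p.toFun k).succPNat + 1 := by
  have hset : {t | ((p.toFun k).succPNat : ℕ) ≤ q.toFun t} =
      insert k {t | ((p.toFun k).succPNat : ℕ) ≤ p.toFun t} := by
    ext t
    obtain rfl | ht := eq_or_ne t k
    · simp [h.1]
    · simp [h.2 t ht, ht]
  rw [Ptn.transpose, hset, Set.ncard_insert_of_notMem (by simp) (p.finite_setOf_le _)]
  rfl

theorem transpose_of_ne (h : AddBoxAt p q k) {i : ℕ+} (hi : i ≠ (p.toFun k).succPNat) :
    q.transpose i = p.transpose i := by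
  have hi' : (i : ℕ) ≠ p.toFun k + 1 := fun hik => hi (PNat.eq hik)
  refine congrArg Set.ncard (Set.ext fun t => ?_)
  change (i : ℕ) ≤ q.toFun t ↔ (i : ℕ) ≤ p.toFun t
  obtain rfl | ht := eq_or_ne t k
  · rw [h.1]; omega
  · rw [h.2 t ht]

theorem ed_eq_add_eps (h : AddBoxAt p q k) (δ : ℤ) :
    ed δ q = ed δ p + eps (p.toFun k).succPNat := by
  funext i
  obtain rfl | hi := eq_or_ne i (p.toFun k).succPNat
  · simp only [ed, eps, Pi.add_apply, h.transpose_succPNat, if_true]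
    push_cast
    ring
  · simp only [ed, eps, Pi.add_apply, h.transpose_of_ne hi, if_neg hi, add_zero]

theorem ed_succPNat (h : AddBoxAt p q k) (δ : ℤ) :
    ed δ q (p.toFun k).succPNat = ed δ p (p.toFun k).succPNat + 1 := by
  simp [h.ed_eq_add_eps δ, eps]

theorem mem_range_ed_iff (h : AddBoxAt p q k) {δ : ℤ} {x : ℚ}
    (hp : |x| ≠ |ed δ p (p.toFun k).succPNat|) (hq : |x| ≠ |ed δ q (p.toFun k).succPNat|) :
    x ∈ Set.range (ed δ p) ↔ x ∈ Set.range (ed δ q) := by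
  rw [h.ed_succPNat δ] at hq
  rw [h.ed_eq_add_eps δ, mem_range_add_eps_iff (ne_of_apply_ne _ hp) (ne_of_apply_ne _ hq)]

theorem sameLabel (h : AddBoxAt p q k) {δ : ℤ} {n : ℚ} (hn : 0 ≤ n)
    (hp : n ≠ |ed δ p (p.toFun k).succPNat|) (hq : n ≠ |ed δ q (p.toFun k).succPNat|) :
    SameLabel δ p q n := by
  rw [← abs_of_nonneg hn] at hp hq
  exact sameLabel_of_mem_range_iff hn (h.mem_range_ed_iff hp hq)
    (h.mem_range_ed_iff (by rwa [abs_neg]) (by rwa [abs_neg]))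

theorem abs_abs_ed_sub_abs_ed_le_one (h : AddBoxAt p q k) (δ : ℤ) :
    |(|ed δ p (p.toFun k).succPNat| - |ed δ q (p.toFun k).succPNat|)| ≤ 1 := by
  refine (abs_abs_sub_abs_le _ _).trans ?_
  simp [h.ed_succPNat δ]

end AddBoxAt

/-- the weight diagrams x_λ and x_μ agree except possibly at two adjacent
vertices n₀ and n₀ + 1 of L. -/
theorem stmt2 (δ : ℤ) (p q : Ptn) (h : ∃ k, AddBoxAt p q k) :
    ∃ n₀ ∈ Lset δ, ∀ n ∈ Lset δ, n ≠ n₀ → n ≠ n₀ + 1 →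
      ((IsCirc δ p n ↔ IsCirc δ q n) ∧ (IsTimes δ p n ↔ IsTimes δ q n) ∧
        (IsUp δ p n ↔ IsUp δ q n) ∧ (IsDown δ p n ↔ IsDown δ q n)) := by
  obtain ⟨k, hbox⟩ := h
  obtain ⟨n₀, hn₀, hsub⟩ := exists_pair_subset_adjacent_of_mem_Lset
    (abs_ed_mem_Lset δ p (p.toFun k).succPNat) (abs_ed_mem_Lset δ q (p.toFun k).succPNat)
    (hbox.abs_abs_ed_sub_abs_ed_le_one δ)
  refine ⟨n₀, hn₀, fun n hn hne hne' => ?_⟩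
  have hnotMem : n ∉ ({n₀, n₀ + 1} : Set ℚ) := not_or.mpr ⟨hne, hne'⟩
  exact hbox.sameLabel hn.1 (fun hnp => hnotMem (hsub (Or.inl hnp)))
    fun hnq => hnotMem (hsub (Or.inr hnq))
end

section
/- Let δ ∈ ℤ and let λ be a partition. Then #{(i,j) ∈ [λ] : d(i,j) = 1 − δ} = deg_δ(λ) − deg_δ(∅). (The left-hand side is the multiplicity of u = δ as a root of the King polynomial P_λ(u).) -/
open Polynomial

/-!
Place beads at the integers `λᵀ_j - j + 1`; the vacant integers are then exactly the gaps
`i - λ_i`. The degree of `λ` counts the pairs of beads `x < y` with `x + y = δ`, and the boxes with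
`d(i, j) = 1 - δ` are, below the diagonal, those of these pairs whose index pair is a box, and on or
above it the pairs of gaps `x ≤ y` with `x + y = δ` whose index pair is a box. So the degree minus
the number of boxes is the number of bead pairs that are not boxes minus the number of gap pairs
that are. Both conditions say that there are at least as many beads above `x` as gaps up to `y`.
The positive part of the difference between these two numbers, taken along `x + y = δ`, changes at
every step by exactly the contribution of the pair `(x, δ - x)`, so the sum over `x` telescopes to
boundary terms that depend only on `δ`; comparing with `λ = ∅` gives the formula.
-/

lemma sum_Ico_int_sub_add_one {M : Type*} [AddCommGroup M] (f : ℤ → M) {a b : ℤ} (hab : a ≤ b) :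
    ∑ x ∈ Finset.Ico a b, (f x - f (x + 1)) = f a - f b := by
  induction b, hab using Int.leInduction with
  | base => simp
  | succ b hab ih =>
    rw [← Finset.sum_Ico_add_eq_sum_Ico_add_one hab, ih]
    abel

lemma ncard_eq_sum_indicator {α : Type*} {S : Set α} {s : Finset α} (hS : S ⊆ s) :
    (S.ncard : ℤ) = ∑ x ∈ s, S.indicator 1 x := by
  classical
  have hfilter : S = ({x ∈ s | x ∈ S} : Finset α) := by
    ext x
    simpa using @hS x
  conv_lhs => rw [hfilter, Set.ncard_coe_finset, Finset.natCast_card_filter]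
  simp only [Set.indicator_apply, Pi.one_apply]

lemma ncard_sub_ncard_eq_of_forall_sub_add_one {S T : Set ℤ} {f : ℤ → ℤ} {a b : ℤ} (hab : a ≤ b)
    (hS : S ⊆ Set.Ico a b) (hT : T ⊆ Set.Ico a b)
    (hf : ∀ x < b, f x - f (x + 1) = S.indicator 1 x - T.indicator 1 x) :
    (S.ncard : ℤ) - T.ncard = f a - f b := by
  rw [← Finset.coe_Ico] at hS hT
  rw [ncard_eq_sum_indicator hS, ncard_eq_sum_indicator hT, ← Finset.sum_sub_distrib,
    ← sum_Ico_int_sub_add_one f hab]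
  exact Finset.sum_congr rfl fun x hx => (hf x (Finset.mem_Ico.mp hx).2).symm

lemma ncard_setOf_add_eq {ι : Type*} {f : ι → ℤ} (hf : f.Injective) (δ : ℤ) (R : ℤ → ℤ → Prop) :
    {q : ι × ι | f q.1 + f q.2 = δ ∧ R (f q.1) (f q.2)}.ncard =
      {x : ℤ | x ∈ Set.range f ∧ δ - x ∈ Set.range f ∧ R x (δ - x)}.ncard := by
  refine Set.ncard_congr (fun q _ => f q.1) ?_ ?_ ?_
  · rintro ⟨i, j⟩ ⟨hsum, hR⟩
    have hj : f j = δ - f i := eq_sub_of_add_eq' hsum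
    exact ⟨⟨i, rfl⟩, ⟨j, hj⟩, hj ▸ hR⟩
  · rintro ⟨i, j⟩ ⟨i', j'⟩ ⟨hsum, -⟩ ⟨hsum', -⟩ hi
    have hj : f j = f j' := add_left_cancel (hsum.trans (hi ▸ hsum'.symm))
    exact Prod.ext (hf hi) (hf hj)
  · rintro _ ⟨⟨i, rfl⟩, ⟨j, hj⟩, hR⟩
    exact ⟨(i, j), ⟨by rw [hj, add_sub_cancel], hj ▸ hR⟩, rfl⟩

lemma finite_setOf_pnat_le (n : ℕ) : {k : ℕ+ | (k : ℕ) ≤ n}.Finite :=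
  (Set.finite_Iic n).preimage PNat.coe_injective.injOn

lemma ncard_setOf_pnat_le (n : ℕ) : {k : ℕ+ | (k : ℕ) ≤ n}.ncard = n := by
  have himage : (fun k : ℕ+ => (k : ℕ)) '' {k | (k : ℕ) ≤ n} = Set.Icc 1 n := by
    ext m
    exact ⟨fun ⟨k, hk, hkm⟩ => hkm ▸ ⟨k.pos, hk⟩, fun ⟨hm, hmn⟩ => ⟨⟨m, hm⟩, hmn, rfl⟩⟩
  rw [← Set.ncard_image_of_injective _ PNat.coe_injective, himage, Set.ncard_Icc_nat,
    Nat.add_sub_cancel]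

lemma mem_iff_le_ncard_of_isLowerSet {S : Set ℕ+} (hS : IsLowerSet S) (hfin : S.Finite)
    (k : ℕ+) : k ∈ S ↔ (k : ℕ) ≤ S.ncard := by
  constructor
  · intro hk
    rw [← ncard_setOf_pnat_le k]
    exact Set.ncard_le_ncard (fun a ha => hS ha hk) hfin
  · contrapose!
    intro hk
    have hsub : S ⊆ {a : ℕ+ | (a : ℕ) ≤ k - 1} := fun a ha => by
      have hak : a < k := lt_of_not_ge fun hka => hk (hS hka ha)
      exact Nat.le_sub_one_of_lt hak
    have hcard := Set.ncard_le_ncard hsub (finite_setOf_pnat_le _)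
    rw [ncard_setOf_pnat_le] at hcard
    have := k.pos
    omega

namespace Ptn

lemma le_toFun_iff_le_transpose (p : Ptn) (i j : ℕ+) :
    (j : ℕ) ≤ p.toFun i ↔ (i : ℕ) ≤ p.transpose j := by
  obtain ⟨N, hN⟩ := p.finite_support'
  have hlower : IsLowerSet {k : ℕ+ | (j : ℕ) ≤ p.toFun k} :=
    fun _ _ hba ha => ha.trans (p.antitone' _ _ hba)
  have hfin : {k : ℕ+ | (j : ℕ) ≤ p.toFun k}.Finite := by
    refine (Set.finite_Iic N).subset fun k hk => le_of_not_ge (fun hNk => ?_ : ¬N ≤ k)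
    exact j.pos.not_ge (hN k hNk ▸ hk)
  exact mem_iff_le_ncard_of_isLowerSet hlower hfin i

lemma transpose_antitone_s9 (p : Ptn) : Antitone p.transpose := by
  intro i j hij
  by_contra! hlt
  let k : ℕ+ := ⟨p.transpose j, by omega⟩
  have hj : (j : ℕ) ≤ p.toFun k := (p.le_toFun_iff_le_transpose k j).mpr le_rfl
  have hi : (k : ℕ) ≤ p.transpose i :=
    (p.le_toFun_iff_le_transpose k i).mp (le_trans (PNat.coe_le_coe _ _ |>.mpr hij) hj)
  exact hlt.not_ge hi

/-- The positions `λᵀ_j - j + 1` of the beads in the Maya diagram of `λ`. They are the entries of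
`e_δ(λ)` shifted by `δ / 2`, which makes them integers for every `δ`. -/
noncomputable def bead (p : Ptn) (j : ℕ+) : ℤ := p.transpose j - (j : ℕ) + 1

/-- The positions `i - λ_i` of the gaps in the Maya diagram of `λ`, that is, of the integers not
occupied by a bead. -/
def gap (p : Ptn) (i : ℕ+) : ℤ := (i : ℕ) - p.toFun i

lemma bead_strictAnti (p : Ptn) : StrictAnti p.bead := by
  intro i j hij
  have htranspose := p.transpose_antitone_s9 hij.le
  have hcoe : (i : ℕ) < j := hij
  simp only [bead]
  omega

lemma gap_strictMono (p : Ptn) : StrictMono p.gap := by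
  intro i j hij
  have htoFun := p.antitone' i j hij.le
  have hcoe : (i : ℕ) < j := hij
  simp only [gap]
  omega

lemma le_toFun_iff_gap_lt_bead (p : Ptn) (i j : ℕ+) :
    (j : ℕ) ≤ p.toFun i ↔ p.gap i < p.bead j := by
  have htranspose := p.le_toFun_iff_le_transpose i j
  simp only [gap, bead]
  omega

lemma gap_ne_bead (p : Ptn) (i j : ℕ+) : p.gap i ≠ p.bead j := by
  have htranspose := p.le_toFun_iff_le_transpose i j
  simp only [gap, bead]
  omega

/-- The number of beads strictly above `x` in the Maya diagram of `λ`. -/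
noncomputable def beadsAbove (p : Ptn) (x : ℤ) : ℕ := {j : ℕ+ | x < p.bead j}.ncard

lemma finite_setOf_lt_bead (p : Ptn) (x : ℤ) : {j : ℕ+ | x < p.bead j}.Finite := by
  refine (finite_setOf_pnat_le (p.transpose 1 - x).toNat).subset fun j hj => ?_
  have htranspose := p.transpose_antitone_s9 (one_le (a := j))
  simp only [Set.mem_ofPred_eq, bead] at hj ⊢
  omega

lemma le_beadsAbove_iff (p : Ptn) (x : ℤ) (j : ℕ+) :
    (j : ℕ) ≤ p.beadsAbove x ↔ x < p.bead j := by
  have hlower : IsLowerSet {j : ℕ+ | x < p.bead j} :=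
    fun _ _ hba ha => ha.trans_le (p.bead_strictAnti.antitone hba)
  exact (mem_iff_le_ncard_of_isLowerSet hlower (p.finite_setOf_lt_bead x) j).symm

lemma beadsAbove_gap (p : Ptn) (i : ℕ+) : p.beadsAbove (p.gap i) = p.toFun i := by
  simp_rw [beadsAbove, ← le_toFun_iff_gap_lt_bead, ncard_setOf_pnat_le]

lemma beadsAbove_bead (p : Ptn) (j : ℕ+) : p.beadsAbove (p.bead j) = (j : ℤ) - 1 := by
  have hset : {k : ℕ+ | p.bead j < p.bead k} = {k : ℕ+ | (k : ℕ) ≤ j - 1} := by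
    ext k
    have hj := j.pos
    rw [Set.mem_ofPred_eq, p.bead_strictAnti.lt_iff_gt, ← PNat.coe_lt_coe, Set.mem_ofPred_eq]
    omega
  rw [beadsAbove, hset, ncard_setOf_pnat_le, Nat.cast_pred j.pos]

lemma range_gap (p : Ptn) : Set.range p.gap = (Set.range p.bead)ᶜ := by
  ext x
  refine ⟨fun ⟨i, hi⟩ ⟨j, hj⟩ => p.gap_ne_bead i j (hi.trans hj.symm), fun hx => ?_⟩
  -- With `n` beads above the vacant position `x`, the gap at `x` has index `n + x`.
  set n := p.beadsAbove x
  have htranspose_succ : p.transpose n.succPNat < n + x := by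
    have hnot_lt := (p.le_beadsAbove_iff x n.succPNat).not.mp (Nat.not_succ_le_self n)
    have hne : p.bead n.succPNat ≠ x := fun h => hx ⟨_, h⟩
    simp only [bead, Nat.succPNat_coe] at hnot_lt hne
    omega
  let i : ℕ+ := ⟨(n + x).toNat, by omega⟩
  have hi : ((i : ℕ) : ℤ) = n + x := Int.toNat_of_nonneg (by omega)
  have hle : p.toFun i ≤ n := by
    have hbox := p.le_toFun_iff_le_transpose i n.succPNat
    rw [Nat.succPNat_coe] at hbox
    omega
  have hge : n ≤ p.toFun i := by
    rcases n.eq_zero_or_pos with hn | hn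
    · exact hn ▸ Nat.zero_le _
    · have hlt : x < p.bead ⟨n, hn⟩ := (p.le_beadsAbove_iff x ⟨n, hn⟩).mp le_rfl
      refine (p.le_toFun_iff_le_transpose i ⟨n, hn⟩).mpr ?_
      simp only [bead, PNat.mk_coe] at hlt
      omega
  exact ⟨i, by rw [gap]; omega⟩

lemma beadsAbove_sub_one (p : Ptn) (x : ℤ) :
    (p.beadsAbove (x - 1) : ℤ) = p.beadsAbove x + (Set.range p.bead).indicator 1 x := by
  by_cases hx : x ∈ Set.range p.bead
  · obtain ⟨j, rfl⟩ := hx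
    have hinsert : {k | p.bead j - 1 < p.bead k} = insert j {k | p.bead j < p.bead k} := by
      ext k
      rw [Set.mem_insert_iff, ← p.bead_strictAnti.injective.eq_iff]
      simp only [Set.mem_ofPred_eq]
      omega
    rw [beadsAbove, hinsert, Set.ncard_insert_of_notMem (by simp) (p.finite_setOf_lt_bead _)]
    simp [beadsAbove]
  · have hset : {k | x - 1 < p.bead k} = {k | x < p.bead k} := by
      ext k
      have hne : p.bead k ≠ x := fun h => hx ⟨k, h⟩
      simp only [Set.mem_ofPred_eq]
      omega
    rw [beadsAbove, hset, Set.indicator_of_notMem hx, add_zero, beadsAbove]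

lemma beadsAbove_of_transpose_one_le (p : Ptn) {x : ℤ} (hx : p.transpose 1 ≤ x) :
    p.beadsAbove x = 0 := by
  have hbead := p.le_beadsAbove_iff x 1
  simp only [bead, PNat.one_coe] at hbead
  omega

lemma beadsAbove_of_le_neg_toFun_one (p : Ptn) {x : ℤ} (hx : x ≤ -p.toFun 1) :
    (p.beadsAbove x : ℤ) = -x := by
  have hset : {j : ℕ+ | x < p.bead j} = {j : ℕ+ | (j : ℕ) ≤ (-x).toNat} := by
    ext j
    have htranspose := p.le_toFun_iff_le_transpose 1 j
    simp only [PNat.one_coe] at htranspose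
    simp only [Set.mem_ofPred_eq, bead]
    omega
  rw [beadsAbove, hset, ncard_setOf_pnat_le]
  omega

/-- The number of beads above `x` minus the number of gaps up to `y`. The latter is written as
`y + #{beads above y}`, the number of gaps up to `y` in the Maya diagram of any partition. -/
noncomputable def excess (p : Ptn) (x y : ℤ) : ℤ := p.beadsAbove x - (p.beadsAbove y + y)

lemma excess_sub_one_left (p : Ptn) (x y : ℤ) :
    p.excess (x - 1) y = p.excess x y + (Set.range p.bead).indicator 1 x := by
  rw [excess, beadsAbove_sub_one, excess]
  ring

lemma excess_sub_one_right (p : Ptn) (x y : ℤ) :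
    p.excess x (y - 1) = p.excess x y + (Set.range p.gap).indicator 1 y := by
  have hcompl := congrFun (Set.indicator_self_add_compl (Set.range p.bead) (1 : ℤ → ℤ)) y
  rw [← range_gap, Pi.add_apply, Pi.one_apply] at hcompl
  rw [excess, beadsAbove_sub_one, excess]
  linarith

lemma excess_self (p : Ptn) (x : ℤ) : p.excess x x = -x := by
  rw [excess]
  ring

lemma max_excess_sub_one_left_sub_max_excess_sub_one_right (p : Ptn) (x y : ℤ) :
    max (p.excess (x - 1) y) 0 - max (p.excess x (y - 1)) 0 =
      if 0 ≤ p.excess x y then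
        (Set.range p.bead).indicator 1 x - (Set.range p.gap).indicator 1 y else 0 := by
  classical
  simp only [excess_sub_one_left, excess_sub_one_right, Set.indicator_apply, Pi.one_apply]
  split_ifs <;> omega

lemma le_toFun_iff_excess_gap_nonneg (p : Ptn) (i j : ℕ+) :
    (j : ℕ) ≤ p.toFun i ↔ 0 ≤ p.excess (p.gap i) (p.gap j) := by
  rw [excess, beadsAbove_gap, beadsAbove_gap, gap]
  omega

lemma toFun_lt_iff_excess_bead_nonneg (p : Ptn) (i j : ℕ+) :
    p.toFun i < j ↔ 0 ≤ p.excess (p.bead i) (p.bead j) := by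
  have htranspose := p.le_toFun_iff_le_transpose i j
  rw [excess, beadsAbove_bead, beadsAbove_bead, bead]
  omega

/-- The smaller elements `x` of the pairs of gaps `x ≤ y` with `x + y = δ` such that `(i, j)` is a
box of `λ`, where `x` and `y` are the `i`-th and `j`-th gaps. -/
def gapPairs (δ : ℤ) (p : Ptn) : Set ℤ :=
  {x | x ∈ Set.range p.gap ∧ δ - x ∈ Set.range p.gap ∧ x ≤ δ - x ∧ 0 ≤ p.excess x (δ - x)}

/-- The smaller elements `x` of the pairs of beads `x < y` with `x + y = δ` such that `(i, j)` is
not a box of `λ`, where `x` and `y` are the `i`-th and `j`-th beads. -/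
def beadPairs (δ : ℤ) (p : Ptn) : Set ℤ :=
  {x | x ∈ Set.range p.bead ∧ δ - x ∈ Set.range p.bead ∧ x < δ - x ∧ 0 ≤ p.excess x (δ - x)}

/-- The quantity whose decrements along `x` count `beadPairs` against `gapPairs`. Beyond `δ / 2`,
where there are no more pairs to count, it stays at `max (1 - ⌈δ / 2⌉) 0`, which makes the last
decrement correct for odd `δ` and also for even `δ`, when `δ / 2` may be paired with itself. -/
noncomputable def potential (δ : ℤ) (p : Ptn) (x : ℤ) : ℤ :=
  if x ≤ δ - x then max (p.excess (x - 1) (δ - x)) 0 else max (1 - (δ + 1) / 2) 0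

lemma potential_add_one_of_lt (δ : ℤ) (p : Ptn) {x : ℤ} (hx : x < δ - x) :
    p.potential δ (x + 1) = max (p.excess x (δ - x - 1)) 0 := by
  rw [potential, add_sub_cancel_right, ← sub_sub]
  split_ifs with hle
  · rfl
  · have hmiddle : δ - x - 1 = x := by omega
    rw [hmiddle, excess_self]
    omega

lemma potential_add_one_of_eq (δ : ℤ) (p : Ptn) {x : ℤ} (hx : x = δ - x) :
    p.potential δ (x + 1) = max (1 - x) 0 := by
  rw [potential, if_neg (by omega)]
  congr 2
  omega

lemma potential_sub_potential_add_one (δ : ℤ) (p : Ptn) {x : ℤ} (hx : x ≤ δ - x) :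
    p.potential δ x - p.potential δ (x + 1) =
      (p.beadPairs δ).indicator 1 x - (p.gapPairs δ).indicator 1 x := by
  classical
  rw [potential, if_pos hx]
  rcases hx.lt_or_eq with hlt | heq
  · rw [potential_add_one_of_lt δ p hlt, max_excess_sub_one_left_sub_max_excess_sub_one_right]
    simp only [range_gap, Set.indicator_apply, Set.mem_compl_iff, Pi.one_apply, beadPairs,
      gapPairs, Set.mem_ofPred_eq]
    grind
  · rw [potential_add_one_of_eq δ p heq, ← heq, excess_sub_one_left, excess_self]
    simp only [range_gap, Set.indicator_apply, Set.mem_compl_iff, Pi.one_apply, beadPairs,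
      gapPairs, Set.mem_ofPred_eq, ← heq, excess_self, lt_irrefl, le_refl]
    grind

lemma ncard_beadPairs_sub_ncard_gapPairs (δ : ℤ) (p : Ptn) :
    ((p.beadPairs δ).ncard : ℤ) - (p.gapPairs δ).ncard =
      max (1 - δ) 0 - max (1 - (δ + 1) / 2) 0 := by
  set a := min (-p.toFun 1 : ℤ) (δ - p.transpose 1)
  have hbead : p.beadPairs δ ⊆ Set.Ico a (δ / 2 + 1) := by
    rintro x ⟨-, ⟨j, hj⟩, hlt, -⟩
    have hle := p.bead_strictAnti.antitone (one_le (a := j))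
    simp only [bead, PNat.one_coe, Set.mem_Ico] at hj hle ⊢
    omega
  have hgap : p.gapPairs δ ⊆ Set.Ico a (δ / 2 + 1) := by
    rintro x ⟨⟨i, hi⟩, -, hle, -⟩
    have hge := p.gap_strictMono.monotone (one_le (a := i))
    simp only [gap, PNat.one_coe, Set.mem_Ico] at hi hge ⊢
    omega
  have hleft : p.potential δ a = max (1 - δ) 0 := by
    rw [potential, if_pos (by omega), excess, p.beadsAbove_of_le_neg_toFun_one (by omega),
      p.beadsAbove_of_transpose_one_le (by omega)]
    congr 1
    push_cast
    ring
  have hright : p.potential δ (δ / 2 + 1) = max (1 - (δ + 1) / 2) 0 := if_neg (by omega)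
  rw [← hleft, ← hright]
  exact ncard_sub_ncard_eq_of_forall_sub_add_one (by omega) hbead hgap
    fun x hx => p.potential_sub_potential_add_one δ (by omega)

/-- The boxes `(i, j)` of `λ` with `d(i, j) = 1 - δ`. -/
def criticalBoxes (δ : ℤ) (p : Ptn) : Set (ℕ+ × ℕ+) :=
  {q | (q.2 : ℕ) ≤ p.toFun q.1 ∧ dbox p q.1 q.2 = 1 - δ}

/-- The pairs counted by the `δ`-degree of singularity, with the larger index first so that they
can be compared with boxes below the diagonal. -/
def singularPairs (δ : ℤ) (p : Ptn) : Set (ℕ+ × ℕ+) :=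
  {q | q.2 < q.1 ∧ p.bead q.1 + p.bead q.2 = δ}

lemma ed_add_ed_eq_zero_iff (δ : ℤ) (p : Ptn) (i j : ℕ+) :
    ed δ p i + ed δ p j = 0 ↔ p.bead i + p.bead j = δ := by
  have hcast : ed δ p i + ed δ p j = ((p.bead i + p.bead j - δ : ℤ) : ℚ) := by
    simp only [ed, bead]
    push_cast
    ring
  rw [hcast, Int.cast_eq_zero, sub_eq_zero]

lemma degd_eq_ncard_singularPairs (δ : ℤ) (p : Ptn) :
    degd δ p = (p.singularPairs δ).ncard := by
  rw [degd, ← Set.ncard_image_of_injective _ Prod.swap_injective, Set.image_swap_eq_preimage_swap]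
  congr 1
  ext ⟨i, j⟩
  simp only [Set.mem_preimage, Prod.swap_prod_mk, Set.mem_ofPred_eq, ed_add_ed_eq_zero_iff,
    singularPairs, add_comm]

lemma finite_criticalBoxes (δ : ℤ) (p : Ptn) : (p.criticalBoxes δ).Finite := by
  refine ((finite_setOf_pnat_le (p.transpose 1)).prod
    (finite_setOf_pnat_le (p.toFun 1))).subset ?_
  rintro ⟨i, j⟩ ⟨hbox, -⟩
  exact ⟨((p.le_toFun_iff_le_transpose i j).mp hbox).trans (p.transpose_antitone_s9 one_le),
    hbox.trans (p.antitone' 1 i one_le)⟩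

lemma finite_singularPairs (δ : ℤ) (p : Ptn) : (p.singularPairs δ).Finite := by
  have hfin := p.finite_setOf_lt_bead (δ - p.bead 1 - 1)
  refine (hfin.prod hfin).subset ?_
  rintro ⟨i, j⟩ ⟨-, hsum⟩
  have hi := p.bead_strictAnti.antitone (one_le (a := i))
  have hj := p.bead_strictAnti.antitone (one_le (a := j))
  simp only [Set.mem_prod, Set.mem_ofPred_eq] at hsum ⊢
  omega

lemma dbox_of_le (p : Ptn) {i j : ℕ+} (hij : i ≤ j) :
    dbox p i j = 1 - (p.gap i + p.gap j) := by
  rw [dbox, if_pos (PNat.coe_le_coe _ _ |>.mpr hij), gap, gap]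
  ring

lemma dbox_of_lt (p : Ptn) {i j : ℕ+} (hji : j < i) :
    dbox p i j = 1 - (p.bead i + p.bead j) := by
  rw [dbox, if_neg (PNat.coe_lt_coe _ _ |>.mpr hji).not_ge, bead, bead]
  ring

lemma ncard_criticalBoxes_sdiff_singularPairs (δ : ℤ) (p : Ptn) :
    (p.criticalBoxes δ \ p.singularPairs δ).ncard = (p.gapPairs δ).ncard := by
  refine Eq.trans ?_ (ncard_setOf_add_eq p.gap_strictMono.injective δ
    fun x y => x ≤ y ∧ 0 ≤ p.excess x y)
  congr 1
  ext ⟨i, j⟩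
  simp only [criticalBoxes, singularPairs, Set.mem_sdiff, Set.mem_ofPred_eq,
    p.gap_strictMono.le_iff_le, ← le_toFun_iff_excess_gap_nonneg]
  rcases le_or_gt i j with hij | hji
  · rw [p.dbox_of_le hij, sub_right_inj]
    simp [hij, hij.not_gt, and_comm]
  · rw [p.dbox_of_lt hji, sub_right_inj]
    simp [hji, hji.not_ge]

lemma ncard_singularPairs_sdiff_criticalBoxes (δ : ℤ) (p : Ptn) :
    (p.singularPairs δ \ p.criticalBoxes δ).ncard = (p.beadPairs δ).ncard := by
  refine Eq.trans ?_ (ncard_setOf_add_eq p.bead_strictAnti.injective δ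
    fun x y => x < y ∧ 0 ≤ p.excess x y)
  congr 1
  ext ⟨i, j⟩
  simp only [criticalBoxes, singularPairs, Set.mem_sdiff, Set.mem_ofPred_eq,
    p.bead_strictAnti.lt_iff_gt, ← toFun_lt_iff_excess_bead_nonneg]
  rcases le_or_gt i j with hij | hji
  · simp [hij.not_gt]
  · rw [p.dbox_of_lt hji, sub_right_inj]
    simp +contextual [hji]

lemma degd_sub_ncard_criticalBoxes (δ : ℤ) (p : Ptn) :
    (degd δ p : ℤ) - (p.criticalBoxes δ).ncard = max (1 - δ) 0 - max (1 - (δ + 1) / 2) 0 := by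
  have hsingular := Set.ncard_inter_add_ncard_sdiff_eq_ncard (p.singularPairs δ)
    (p.criticalBoxes δ) (p.finite_singularPairs δ)
  have hcritical := Set.ncard_inter_add_ncard_sdiff_eq_ncard (p.criticalBoxes δ)
    (p.singularPairs δ) (p.finite_criticalBoxes δ)
  rw [Set.inter_comm, ncard_singularPairs_sdiff_criticalBoxes] at hsingular
  rw [ncard_criticalBoxes_sdiff_singularPairs] at hcritical
  rw [degd_eq_ncard_singularPairs, ← ncard_beadPairs_sub_ncard_gapPairs δ p]
  omega

lemma criticalBoxes_empty (δ : ℤ) : empty.criticalBoxes δ = ∅ :=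
  Set.eq_empty_of_forall_notMem fun q hq => q.2.pos.not_ge hq.1

end Ptn

/-- #{(i,j) ∈ [λ] : d(i,j) = 1 − δ} = deg_δ(λ) − deg_δ(∅). -/
theorem stmt9 (δ : ℤ) (p : Ptn) :
    (Set.ncard {q : ℕ+ × ℕ+ | (q.2 : ℕ) ≤ p.toFun q.1 ∧ dbox p q.1 q.2 = 1 - δ} : ℤ)
      = (degd δ p : ℤ) - (degd δ Ptn.empty : ℤ) := by
  change ((p.criticalBoxes δ).ncard : ℤ) = _
  have hp := p.degd_sub_ncard_criticalBoxes δ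
  have hempty := Ptn.empty.degd_sub_ncard_criticalBoxes δ
  rw [Ptn.criticalBoxes_empty, Set.ncard_empty, Nat.cast_zero, sub_zero] at hempty
  linarith
end
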